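/- Let X be a GT space and let (x_n)_{n∈ℕ} together with (x_n*)_{n∈ℕ} be a quasi-greedy basis of X. Then ℓ_1 embeds in X via the basis and X embeds in weak-ℓ_1 via the basis; i.e., there is a constant C such that: (a) for every real sequence (a_n) with Σ_n |a_n| < ∞, the series Σ_n a_n x_n converges in X and ‖Σ_n a_n x_n‖ ≤ C·Σ_n |a_n|; and (b) for every f ∈ X and every t > 0, t times the number of indices n with |x_n*(f)| ≥ t is at most C·‖f‖. -/

import Mathlib

/-!
For a finite set `A` of indices let `T_A : X → ℓ_2` be `f ↦ (x_n^*(f))_{n ∈ A}`. Fix `f` and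
`t > 0`, and let `s ⊆ A` consist of indices with `|x_n^*(f)| ≥ t`. Applied to `T_A` and
`(x_n)_{n ∈ s}`, the GT property bounds `|s|` by `D ‖T_A‖ ‖∑_{n ∈ s} ε_n x_n‖` for some signs
`ε_n`, and restricted truncation bounds the norm of this signed sum by a multiple of `‖f‖ / t`.
Hence the weak-`ℓ_1` quasi-norm of `(x_n^*(f))_{n ∈ A}` is at most a multiple of `‖T_A‖ ‖f‖`.
Interpolating with the trivial `ℓ_∞` bound gives `‖T_A‖² ≤ R ‖T_A‖`, with `R` independent of `A`;
so `‖T_A‖ ≤ R`, and feeding this back into the weak-`ℓ_1` estimate removes its dependence on `A`.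
-/

open scoped BigOperators ENNReal

/-- `X` is a GT space: every bounded operator into `ℓ_2` is absolutely summing,
with the absolutely summing norm controlled by `D·‖T‖`. -/
def IsGTSpace (X : Type*) [NormedAddCommGroup X] [NormedSpace ℝ X] : Prop :=
  ∃ D : ℝ, ∀ T : X →L[ℝ] lp (fun _ : ℕ => ℝ) 2, ∀ (B : Finset ℕ) (f : ℕ → X),
    ∃ ε : ℕ → ℝ, (∀ k, ε k = 1 ∨ ε k = -1) ∧
      ∑ k ∈ B, ‖T (f k)‖ ≤ D * ‖T‖ * ‖∑ k ∈ B, ε k • f k‖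

/-- `A` is a greedy set for the coefficient sequence `coef`. -/
def GreedySet (coef : ℕ → ℝ) (A : Finset ℕ) : Prop :=
  ∀ n ∈ A, ∀ k ∉ A, |coef k| ≤ |coef n|

/-- `(x_n)` together with bounded linear functionals `(x_n^*)` is a
(semi-normalized, fundamental, M-bounded Markushevich) basis of `X`. -/
structure IsXBasis {X : Type*} [NormedAddCommGroup X] [NormedSpace ℝ X]
    (x : ℕ → X) (xs : ℕ → X →L[ℝ] ℝ) : Prop where
  biorth : ∀ m n, xs m (x n) = if m = n then (1 : ℝ) else 0
  dense : ∀ f : X, ∀ ε > 0, ∃ (A : Finset ℕ) (c : ℕ → ℝ), ‖f - ∑ n ∈ A, c n • x n‖ < ε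
  norm_lb : ∃ c > 0, ∀ n, c ≤ ‖x n‖
  norm_ub : ∃ C : ℝ, ∀ n, ‖x n‖ ≤ C
  dual_ub : ∃ b : ℝ, ∀ n, ‖xs n‖ ≤ b

/-- The sign function, with the convention `sgn 0 = 1`. -/
noncomputable def sgn (a : ℝ) : ℝ := if a = 0 then 1 else a / |a|

/-- The basis has the bounded restricted truncation operator property:
`‖U(f,A)‖ ≤ C₀·‖f‖` for every greedy set `A` of `f`, where
`U(f,A) = (min_{n∈A} |x_n^*(f)|)·∑_{n∈A} sgn(x_n^*(f))·x_n`. -/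
def BRTP {X : Type*} [NormedAddCommGroup X] [NormedSpace ℝ X]
    (x : ℕ → X) (xs : ℕ → X →L[ℝ] ℝ) : Prop :=
  ∃ C₀ ≥ (1 : ℝ), ∀ (f : X) (A : Finset ℕ) (h : A.Nonempty),
    GreedySet (fun n => xs n f) A →
    ‖(A.inf' h fun n => |xs n f|) • ∑ n ∈ A, sgn (xs n f) • x n‖ ≤ C₀ * ‖f‖

/-- The basis is quasi-greedy: greedy projections are uniformly bounded. -/
def QuasiGreedyX {X : Type*} [NormedAddCommGroup X] [NormedSpace ℝ X]
    (x : ℕ → X) (xs : ℕ → X →L[ℝ] ℝ) : Prop :=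
  ∃ C₀ ≥ (1 : ℝ), ∀ (f : X) (A : Finset ℕ), GreedySet (fun n => xs n f) A →
    ‖∑ n ∈ A, xs n f • x n‖ ≤ C₀ * ‖f‖

open Finset Filter Topology

section WeightedSums

variable {ι E : Type*} [NormedAddCommGroup E] [NormedSpace ℝ E]

theorem norm_sum_sub_smul_le {s : Finset ι} {v : ι → E} {w : ι → ℝ} {a b M : ℝ}
    (hM : ∀ A ⊆ s, (∀ i ∈ A, ∀ j ∈ s, j ∉ A → w j ≤ w i) → ‖∑ i ∈ A, v i‖ ≤ M)
    (hab : a ≤ b) (ha : ∀ i ∈ s, a ≤ w i) (hb : ∀ i ∈ s, w i ≤ b) :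
    ‖∑ i ∈ s, (w i - a) • v i‖ ≤ (b - a) * M := by
  classical
  induction s using Finset.induction_on_min_value w generalizing a with
  | empty =>
    have hM₀ : 0 ≤ M := by simpa using hM ∅
    simpa using mul_nonneg (sub_nonneg.2 hab) hM₀
  | insert k s hk hmin ih =>
    have hak : a ≤ w k := ha k (mem_insert_self k s)
    have hrest : ‖∑ i ∈ s, (w i - w k) • v i‖ ≤ (b - w k) * M := by
      refine ih (fun A hA hup => hM A (hA.trans (subset_insert k s)) fun i hi j hj hjA => ?_)
        (hb k (mem_insert_self k s)) hmin fun i hi => hb i (mem_insert_of_mem hi)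
      rcases mem_insert.1 hj with rfl | hj
      · exact hmin i (hA hi)
      · exact hup i hi j hj hjA
    have hall : ‖(w k - a) • ∑ i ∈ insert k s, v i‖ ≤ (w k - a) * M := by
      rw [norm_smul, Real.norm_of_nonneg (sub_nonneg.2 hak)]
      exact mul_le_mul_of_nonneg_left
        (hM _ Subset.rfl fun _ _ j hj hj' => absurd hj hj') (sub_nonneg.2 hak)
    have habel : ∑ i ∈ insert k s, (w i - a) • v i =
        (w k - a) • ∑ i ∈ insert k s, v i + ∑ i ∈ s, (w i - w k) • v i := by
      simp only [sum_insert hk, smul_add, smul_sum, add_assoc, ← sum_add_distrib, ← add_smul,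
        sub_add_sub_cancel']
    calc ‖∑ i ∈ insert k s, (w i - a) • v i‖
        ≤ (w k - a) * M + (b - w k) * M := habel ▸ norm_add_le_of_le hall hrest
      _ = (b - a) * M := by ring

theorem norm_sum_smul_le_two_mul_of_abs_eq_one {x : ι → E} {s : Finset ι} {d e : ι → ℝ} {M : ℝ}
    (hd : ∀ i ∈ s, |d i| = 1) (he : ∀ i ∈ s, |e i| = 1)
    (hM : ∀ A ⊆ s, ‖∑ i ∈ A, d i • x i‖ ≤ M) :
    ‖∑ i ∈ s, e i • x i‖ ≤ 2 * M := by
  have hagree : ∑ i ∈ s with e i = d i, e i • x i = ∑ i ∈ s with e i = d i, d i • x i :=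
    sum_congr rfl fun i hi => by rw [(mem_filter.1 hi).2]
  have hdiffer : ∑ i ∈ s with ¬e i = d i, e i • x i = -∑ i ∈ s with ¬e i = d i, d i • x i := by
    rw [← sum_neg_distrib]
    refine sum_congr rfl fun i hi => ?_
    obtain ⟨his, hne⟩ := mem_filter.1 hi
    rw [(abs_eq_abs.1 ((he i his).trans (hd i his).symm)).resolve_left hne, neg_smul]
  calc ‖∑ i ∈ s, e i • x i‖
      = ‖∑ i ∈ s with e i = d i, d i • x i - ∑ i ∈ s with ¬e i = d i, d i • x i‖ := by
        rw [← sum_filter_add_sum_filter_not s (fun i => e i = d i), hagree, hdiffer, sub_eq_add_neg]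
    _ ≤ M + M := norm_sub_le_of_le (hM _ (filter_subset _ s)) (hM _ (filter_subset _ s))
    _ = 2 * M := (two_mul M).symm

theorem exists_tendsto_sum_smul_norm_le [CompleteSpace E] {x : ℕ → E} {c : ℝ}
    (hx : ∀ n, ‖x n‖ ≤ c) {a : ℕ → ℝ} (ha : Summable fun n => |a n|) :
    ∃ f : E, Tendsto (fun N => ∑ n ∈ range N, a n • x n) atTop (𝓝 f) ∧
      ‖f‖ ≤ c * ∑' n, |a n| := by
  have hterm (n : ℕ) : ‖a n • x n‖ ≤ c * |a n| := by
    rw [norm_smul, Real.norm_eq_abs, mul_comm]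
    exact mul_le_mul_of_nonneg_right (hx n) (abs_nonneg _)
  have hsum : Summable fun n => a n • x n := .of_norm_bounded (ha.mul_left c) hterm
  exact ⟨_, hsum.hasSum.tendsto_sum_nat, tsum_of_norm_bounded (ha.hasSum.mul_left c) hterm⟩

end WeightedSums

section WeakL1

variable {ι : Type*}

theorem sum_sq_sub_sq_le_of_weakL1 {s : Finset ι} {a : ι → ℝ} {L b m : ℝ}
    (hweak : ∀ t, 0 < t → ∀ B ⊆ s, (∀ i ∈ B, t ≤ a i) → t * #B ≤ L)
    (hm : 0 ≤ m) (hmb : m ≤ b) (hma : ∀ i ∈ s, m ≤ a i) (hab : ∀ i ∈ s, a i ≤ b) :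
    ∑ i ∈ s, (a i ^ 2 - m ^ 2) ≤ 2 * L * (b - m) := by
  classical
  have hL : 0 ≤ L := by simpa using hweak 1 one_pos ∅ (empty_subset s)
  induction s using Finset.induction_on_min_value a generalizing m with
  | empty => simpa using mul_nonneg (mul_nonneg zero_le_two hL) (sub_nonneg.2 hmb)
  | insert k s hk hmin ih =>
    have hmk : m ≤ a k := hma k (mem_insert_self k s)
    have hrest : ∑ i ∈ s, (a i ^ 2 - a k ^ 2) ≤ 2 * L * (b - a k) :=
      ih (fun t ht B hB => hweak t ht B (hB.trans (subset_insert k s))) (hm.trans hmk)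
        (hab k (mem_insert_self k s)) hmin fun i hi => hab i (mem_insert_of_mem hi)
    have hcard : a k * #(insert k s) ≤ L := by
      rcases (hm.trans hmk).eq_or_lt with hzero | hpos
      · simpa [← hzero] using hL
      · exact hweak _ hpos _ Subset.rfl (by simpa using hmin)
    have hlayer : (a k ^ 2 - m ^ 2) * #(insert k s) ≤ 2 * L * (a k - m) := by
      have hcard' : m * #(insert k s) ≤ L := (by gcongr : _ ≤ a k * (#(insert k s) : ℝ)).trans hcard
      calc (a k ^ 2 - m ^ 2) * #(insert k s)
          = (a k * #(insert k s) + m * #(insert k s)) * (a k - m) := by ring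
        _ ≤ (L + L) * (a k - m) := by gcongr
        _ = 2 * L * (a k - m) := by ring
    calc ∑ i ∈ insert k s, (a i ^ 2 - m ^ 2)
        = (a k ^ 2 - m ^ 2) * #(insert k s) + ∑ i ∈ s, (a i ^ 2 - a k ^ 2) := by
          simp only [sum_insert hk, card_insert_of_notMem hk, sum_sub_distrib, sum_const,
            nsmul_eq_mul, Nat.cast_add, Nat.cast_one]
          ring
      _ ≤ 2 * L * (a k - m) + 2 * L * (b - a k) := add_le_add hlayer hrest
      _ = 2 * L * (b - m) := by ring

theorem sum_sq_le_of_weakL1 {s : Finset ι} {a : ι → ℝ} {L b : ℝ}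
    (hweak : ∀ t, 0 < t → ∀ B ⊆ s, (∀ i ∈ B, t ≤ a i) → t * #B ≤ L)
    (hb : 0 ≤ b) (ha : ∀ i ∈ s, 0 ≤ a i) (hab : ∀ i ∈ s, a i ≤ b) :
    ∑ i ∈ s, a i ^ 2 ≤ 2 * L * b := by
  simpa using sum_sq_sub_sq_le_of_weakL1 hweak le_rfl hb ha hab

end WeakL1

section CoordL2

variable {ι X : Type*} [DecidableEq ι] [NormedAddCommGroup X] [NormedSpace ℝ X]

/-- The operator `f ↦ (x_i^*(f))_{i ∈ A}` from `X` to `ℓ_2(ι)`, extended by zero outside the finite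
set `A`. The GT property is tested on these operators. -/
noncomputable def coordL2 (xs : ι → X →L[ℝ] ℝ) (A : Finset ι) : X →L[ℝ] lp (fun _ : ι => ℝ) 2 :=
  ∑ i ∈ A, (xs i).smulRight (lp.single (E := fun _ : ι => ℝ) 2 i (1 : ℝ))

theorem norm_coordL2_apply_sq (xs : ι → X →L[ℝ] ℝ) (A : Finset ι) (f : X) :
    ‖coordL2 xs A f‖ ^ 2 = ∑ i ∈ A, |xs i f| ^ 2 := by
  have happly : coordL2 xs A f = ∑ i ∈ A, lp.single (E := fun _ : ι => ℝ) 2 i (xs i f) := by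
    simp [coordL2, ← lp.single_smul]
  simpa [happly] using
    lp.norm_sum_single (E := fun _ : ι => ℝ) (p := 2) (by simp) (fun i => xs i f) A

theorem norm_coordL2_le_of_weakL1 {xs : ι → X →L[ℝ] ℝ} {A : Finset ι} {b L : ℝ} (hb₀ : 0 ≤ b)
    (hL : 0 ≤ L) (hb : ∀ i ∈ A, ‖xs i‖ ≤ b)
    (hweak : ∀ f t, 0 < t → ∀ B ⊆ A, (∀ i ∈ B, t ≤ |xs i f|) →
      t * #B ≤ L * ‖coordL2 xs A‖ * ‖f‖) :
    ‖coordL2 xs A‖ ≤ 2 * L * b := by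
  set K := ‖coordL2 xs A‖
  have hK : 0 ≤ K := norm_nonneg _
  have happly (f : X) : ‖coordL2 xs A f‖ ≤ √(2 * L * b * K) * ‖f‖ := by
    refine le_of_sq_le_sq ?_ (by positivity)
    calc ‖coordL2 xs A f‖ ^ 2 = ∑ i ∈ A, |xs i f| ^ 2 := norm_coordL2_apply_sq xs A f
      _ ≤ 2 * (L * K * ‖f‖) * (b * ‖f‖) :=
        sum_sq_le_of_weakL1 (hweak f) (by positivity) (fun i _ => abs_nonneg _)
          fun i hi => (xs i).le_of_opNorm_le (hb i hi) f
      _ = (√(2 * L * b * K) * ‖f‖) ^ 2 := by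
        rw [mul_pow, Real.sq_sqrt (by positivity)]
        ring
  have hsq : K ^ 2 ≤ 2 * L * b * K :=
    (Real.le_sqrt hK (by positivity)).1 <|
      (coordL2 xs A).opNorm_le_bound (Real.sqrt_nonneg _) happly
  rcases hK.eq_or_lt with hzero | hpos
  · rw [← hzero]
    positivity
  · exact le_of_mul_le_mul_right (by rwa [← sq]) hpos

end CoordL2

theorem abs_sgn (a : ℝ) : |sgn a| = 1 := by
  by_cases ha : a = 0 <;> simp [sgn, ha, abs_div]

theorem sgn_eq_self_of_abs_eq_one {a : ℝ} (ha : |a| = 1) : sgn a = a := by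
  have ha₀ : a ≠ 0 := by rintro rfl; simp at ha
  simp [sgn, ha₀, ha]

section Truncation

variable {X : Type*} [NormedAddCommGroup X] [NormedSpace ℝ X] {x : ℕ → X} {xs : ℕ → X →L[ℝ] ℝ}

theorem GreedySet.norm_smul_sum_sgn_le {a : ℕ → ℝ} {A : Finset ℕ} {M m : ℝ} (hA : GreedySet a A)
    (hM : ∀ B, GreedySet a B → ‖∑ n ∈ B, a n • x n‖ ≤ M) (hm : 0 ≤ m)
    (hmA : ∀ n ∈ A, m ≤ |a n|) :
    ‖m • ∑ n ∈ A, sgn (a n) • x n‖ ≤ 2 * M := by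
  rcases hm.eq_or_lt with rfl | hm
  · simpa using hM ∅ (by simp [GreedySet])
  have hpos (n) (hn : n ∈ A) : 0 < |a n| := hm.trans_le (hmA n hn)
  -- The weights `-m / |a n| ∈ [-1, 0]` increase with `|a n|`, so their upper sets are greedy.
  have hrest : ‖∑ n ∈ A, (-(m / |a n|) - -1) • a n • x n‖ ≤ (0 - -1) * M := by
    refine norm_sum_sub_smul_le (fun B hB hup => hM B fun n hn k hk => ?_) (by norm_num)
      (fun n hn => neg_le_neg ((div_le_one (hpos n hn)).2 (hmA n hn)))
      fun n _ => neg_nonpos.2 (by positivity)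
    by_cases hkA : k ∈ A
    · have hdiv : m / |a n| ≤ m / |a k| := neg_le_neg_iff.1 (hup n hn k hkA hk)
      exact (div_le_div_iff_of_pos_left hm (hpos n (hB hn)) (hpos k hkA)).1 hdiv
    · exact hA n (hB hn) k hkA
  have hsplit : m • ∑ n ∈ A, sgn (a n) • x n =
      ∑ n ∈ A, a n • x n - ∑ n ∈ A, (-(m / |a n|) - -1) • a n • x n := by
    rw [smul_sum, ← sum_sub_distrib]
    refine sum_congr rfl fun n hn => ?_
    rw [sgn, if_neg (abs_pos.1 (hpos n hn))]
    module
  calc ‖m • ∑ n ∈ A, sgn (a n) • x n‖ ≤ M + (0 - -1) * M :=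
        hsplit ▸ norm_sub_le_of_le (hM A hA) hrest
    _ = 2 * M := by ring

theorem QuasiGreedyX.brtp (hqg : QuasiGreedyX x xs) : BRTP x xs := by
  obtain ⟨C, hC, hgreedy⟩ := hqg
  refine ⟨2 * C, by linarith, fun f A hne hA => ?_⟩
  rw [mul_assoc]
  exact hA.norm_smul_sum_sgn_le (hgreedy f) (le_inf' hne _ fun n _ => abs_nonneg _)
    fun n hn => inf'_le _ hn

/-- The restricted truncation property `BRTP` with constant `C`. Any lower bound `t ≥ 0` of the
coefficients on the greedy set stands in for their minimum, so that the empty set needs no special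
treatment. -/
def RestrictedTruncationBound (x : ℕ → X) (xs : ℕ → X →L[ℝ] ℝ) (C : ℝ) : Prop :=
  ∀ (f : X) (A : Finset ℕ) (t : ℝ), GreedySet (fun n => xs n f) A → 0 ≤ t →
    (∀ n ∈ A, t ≤ |xs n f|) → t * ‖∑ n ∈ A, sgn (xs n f) • x n‖ ≤ C * ‖f‖

theorem BRTP.exists_restrictedTruncationBound (h : BRTP x xs) :
    ∃ C > 0, RestrictedTruncationBound x xs C := by
  obtain ⟨C, hC, hbound⟩ := h
  have hC₀ : 0 < C := one_pos.trans_le hC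
  refine ⟨C, hC₀, fun f A t hA ht htA => ?_⟩
  rcases A.eq_empty_or_nonempty with rfl | hne
  · simpa using mul_nonneg hC₀.le (norm_nonneg f)
  have htmin : t ≤ A.inf' hne fun n => |xs n f| := le_inf' hne _ htA
  calc t * ‖∑ n ∈ A, sgn (xs n f) • x n‖
      ≤ (A.inf' hne fun n => |xs n f|) * ‖∑ n ∈ A, sgn (xs n f) • x n‖ := by gcongr
    _ = ‖(A.inf' hne fun n => |xs n f|) • ∑ n ∈ A, sgn (xs n f) • x n‖ := by
      rw [norm_smul, Real.norm_of_nonneg (ht.trans htmin)]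
    _ ≤ C * ‖f‖ := hbound f A hne hA

end Truncation

section Basis

variable {X : Type*} [NormedAddCommGroup X] [NormedSpace ℝ X] {x : ℕ → X} {xs : ℕ → X →L[ℝ] ℝ}

theorem IsXBasis.coord_sum_smul (hb : IsXBasis x xs) (A : Finset ℕ) (d : ℕ → ℝ) (m : ℕ) :
    xs m (∑ n ∈ A, d n • x n) = if m ∈ A then d m else 0 := by
  simp [hb.biorth]

theorem IsXBasis.finite_setOf_le_abs_coord (hb : IsXBasis x xs) (f : X) {t : ℝ} (ht : 0 < t) :
    {n | t ≤ |xs n f|}.Finite := by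
  obtain ⟨b, hdual⟩ := hb.dual_ub
  have hb₀ : 0 ≤ b := (norm_nonneg _).trans (hdual 0)
  obtain ⟨A, c, happrox⟩ := hb.dense f (t / (b + 1)) (by positivity)
  refine A.finite_toSet.subset fun n (hn : t ≤ |xs n f|) => ?_
  by_contra hnA
  refine hn.not_gt ?_
  set g := f - ∑ k ∈ A, c k • x k with hg
  have hcoord : xs n f = xs n g := by
    rw [hg, map_sub, hb.coord_sum_smul, if_neg (by simpa using hnA), sub_zero]
  calc |xs n f| = ‖xs n g‖ := by rw [hcoord, Real.norm_eq_abs]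
    _ ≤ b * ‖g‖ := (xs n).le_of_opNorm_le (hdual n) g
    _ ≤ (b + 1) * ‖g‖ := by gcongr; linarith
    _ < t := (lt_div_iff₀' (by positivity)).1 happrox

theorem IsXBasis.norm_coordL2_apply_basis (hb : IsXBasis x xs) {A : Finset ℕ} {n : ℕ}
    (hn : n ∈ A) : ‖coordL2 xs A (x n)‖ = 1 := by
  have hsq : ‖coordL2 xs A (x n)‖ ^ 2 = 1 := by
    rw [norm_coordL2_apply_sq, sum_eq_single_of_mem n hn fun m _ hmn => by simp [hb.biorth, hmn]]
    simp [hb.biorth]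
  exact (pow_eq_one_iff_of_nonneg (norm_nonneg _) two_ne_zero).1 hsq

theorem RestrictedTruncationBound.norm_sum_subset_le {C : ℝ}
    (hC : RestrictedTruncationBound x xs C) (hb : IsXBasis x xs) {A s : Finset ℕ} (hs : s ⊆ A)
    {d : ℕ → ℝ} (hd : ∀ n ∈ A, |d n| = 1) :
    ‖∑ n ∈ s, d n • x n‖ ≤ C * ‖∑ n ∈ A, d n • x n‖ := by
  set g := ∑ n ∈ A, d n • x n
  have hcoord (n) (hn : n ∈ s) : xs n g = d n := by rw [hb.coord_sum_smul, if_pos (hs hn)]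
  have habs (n) (hn : n ∈ s) : |xs n g| = 1 := by rw [hcoord n hn, hd n (hs hn)]
  have hgreedy : GreedySet (fun n => xs n g) s := by
    intro n hn k _
    dsimp only
    rw [habs n hn, hb.coord_sum_smul]
    split_ifs with hk
    · exact (hd k hk).le
    · simp
  have hsgn : ∑ n ∈ s, sgn (xs n g) • x n = ∑ n ∈ s, d n • x n :=
    sum_congr rfl fun n hn => by rw [sgn_eq_self_of_abs_eq_one (habs n hn), hcoord n hn]
  simpa [hsgn] using hC g s 1 hgreedy zero_le_one fun n hn => (habs n hn).ge

theorem RestrictedTruncationBound.mul_norm_sum_signs_le {C : ℝ}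
    (hC : RestrictedTruncationBound x xs C) (hC₀ : 0 ≤ C) (hb : IsXBasis x xs) {f : X} {t : ℝ}
    (ht : 0 < t) {s : Finset ℕ} (hs : ∀ n ∈ s, t ≤ |xs n f|) {ε : ℕ → ℝ}
    (hε : ∀ n ∈ s, |ε n| = 1) :
    t * ‖∑ n ∈ s, ε n • x n‖ ≤ 2 * C ^ 2 * ‖f‖ := by
  set G := (hb.finite_setOf_le_abs_coord f ht).toFinset
  have hmem {n : ℕ} : n ∈ G ↔ t ≤ |xs n f| := by simp [G]
  have hgreedy : GreedySet (fun n => xs n f) G := fun n hn k hk =>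
    (not_le.1 (hmem.not.1 hk)).le.trans (hmem.1 hn)
  have hsG : s ⊆ G := fun n hn => hmem.2 (hs n hn)
  have hsigns : ‖∑ n ∈ s, ε n • x n‖ ≤ 2 * (C * ‖∑ n ∈ G, sgn (xs n f) • x n‖) :=
    norm_sum_smul_le_two_mul_of_abs_eq_one (fun n _ => abs_sgn (xs n f)) hε fun A hA =>
      hC.norm_sum_subset_le hb (hA.trans hsG) fun n _ => abs_sgn (xs n f)
  calc t * ‖∑ n ∈ s, ε n • x n‖
      ≤ t * (2 * (C * ‖∑ n ∈ G, sgn (xs n f) • x n‖)) := by gcongr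
    _ = 2 * C * (t * ‖∑ n ∈ G, sgn (xs n f) • x n‖) := by ring
    _ ≤ 2 * C * (C * ‖f‖) :=
      mul_le_mul_of_nonneg_left (hC f G t hgreedy ht.le fun _ => hmem.1) (by positivity)
    _ = 2 * C ^ 2 * ‖f‖ := by ring

theorem IsGTSpace.exists_card_le_mul_norm_sum_signs (hGT : IsGTSpace X) (hb : IsXBasis x xs) :
    ∃ D > 0, ∀ A, ∀ s ⊆ A, ∃ ε : ℕ → ℝ, (∀ n, |ε n| = 1) ∧
      (#s : ℝ) ≤ D * ‖coordL2 xs A‖ * ‖∑ n ∈ s, ε n • x n‖ := by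
  obtain ⟨D, hD⟩ := hGT
  refine ⟨max D 1, by positivity, fun A s hs => ?_⟩
  obtain ⟨ε, hε, hsum⟩ := hD (coordL2 xs A) s x
  refine ⟨ε, fun n => (abs_eq zero_le_one).2 (hε n), ?_⟩
  calc (#s : ℝ) = ∑ n ∈ s, ‖coordL2 xs A (x n)‖ := by
        simp [sum_congr rfl fun _ hn => hb.norm_coordL2_apply_basis (hs hn)]
    _ ≤ D * ‖coordL2 xs A‖ * ‖∑ n ∈ s, ε n • x n‖ := hsum
    _ ≤ max D 1 * ‖coordL2 xs A‖ * ‖∑ n ∈ s, ε n • x n‖ := by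
      gcongr
      exact le_max_left D 1

theorem IsGTSpace.exists_weakL1_bound_norm_coordL2 (hGT : IsGTSpace X) (hb : IsXBasis x xs)
    (htrunc : BRTP x xs) :
    ∃ L > 0, ∀ A f t, 0 < t → ∀ s ⊆ A, (∀ n ∈ s, t ≤ |xs n f|) →
      t * #s ≤ L * ‖coordL2 xs A‖ * ‖f‖ := by
  obtain ⟨C, hC₀, hC⟩ := htrunc.exists_restrictedTruncationBound
  obtain ⟨D, hD₀, hD⟩ := hGT.exists_card_le_mul_norm_sum_signs hb
  refine ⟨D * (2 * C ^ 2), by positivity, fun A f t ht s hsA hs => ?_⟩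
  obtain ⟨ε, hε, hcard⟩ := hD A s hsA
  calc t * #s ≤ t * (D * ‖coordL2 xs A‖ * ‖∑ n ∈ s, ε n • x n‖) := by gcongr
    _ = D * ‖coordL2 xs A‖ * (t * ‖∑ n ∈ s, ε n • x n‖) := by ring
    _ ≤ D * ‖coordL2 xs A‖ * (2 * C ^ 2 * ‖f‖) :=
      mul_le_mul_of_nonneg_left
        (hC.mul_norm_sum_signs_le hC₀.le hb ht hs fun n _ => hε n) (by positivity)
    _ = D * (2 * C ^ 2) * ‖coordL2 xs A‖ * ‖f‖ := by ring

theorem IsGTSpace.exists_weakL1_bound (hGT : IsGTSpace X) (hb : IsXBasis x xs)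
    (htrunc : BRTP x xs) :
    ∃ C : ℝ, ∀ f t, 0 < t → ∀ s : Finset ℕ, (∀ n ∈ s, t ≤ |xs n f|) → t * #s ≤ C * ‖f‖ := by
  obtain ⟨L, hL, hweak⟩ := hGT.exists_weakL1_bound_norm_coordL2 hb htrunc
  obtain ⟨b, hdual⟩ := hb.dual_ub
  have hb₀ : 0 ≤ b := (norm_nonneg _).trans (hdual 0)
  refine ⟨L * (2 * L * b), fun f t ht s hs => ?_⟩
  calc t * #s ≤ L * ‖coordL2 xs s‖ * ‖f‖ := hweak s f t ht s Subset.rfl hs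
    _ ≤ L * (2 * L * b) * ‖f‖ := by
      gcongr
      exact norm_coordL2_le_of_weakL1 hb₀ hL.le (fun n _ => hdual n) (hweak s)

end Basis

theorem stmt13_general {X : Type*} [NormedAddCommGroup X] [NormedSpace ℝ X] [CompleteSpace X]
    (hGT : IsGTSpace X) (x : ℕ → X) (xs : ℕ → X →L[ℝ] ℝ)
    (hbasis : IsXBasis x xs) (htrunc : BRTP x xs) :
    ∃ C : ℝ, 0 < C ∧
      (∀ a : ℕ → ℝ, Summable (fun n => |a n|) →
        ∃ f : X, Tendsto (fun N => ∑ n ∈ range N, a n • x n) atTop (𝓝 f) ∧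
          ‖f‖ ≤ C * ∑' n, |a n|) ∧
      (∀ f : X, ∀ t : ℝ, 0 < t → ∀ s : Finset ℕ,
        (∀ n ∈ s, t ≤ |xs n f|) → t * (s.card : ℝ) ≤ C * ‖f‖) := by
  obtain ⟨c, hc⟩ := hbasis.norm_ub
  obtain ⟨C, hC⟩ := hGT.exists_weakL1_bound hbasis htrunc
  refine ⟨max 1 (max c C), by positivity, fun a ha => ?_, fun f t ht s hs => ?_⟩
  · exact exists_tendsto_sum_smul_norm_le (fun n => (hc n).trans (by simp)) ha
  · exact (hC f t ht s hs).trans (by gcongr; simp)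

/-- For a quasi-greedy basis of a GT space `X`: (a) `ℓ_1` embeds in `X` via the
basis, and (b) `X` embeds in weak-`ℓ_1` via the basis. -/
theorem stmt13 {X : Type*} [NormedAddCommGroup X] [NormedSpace ℝ X] [CompleteSpace X]
    (hGT : IsGTSpace X) (x : ℕ → X) (xs : ℕ → X →L[ℝ] ℝ)
    (hbasis : IsXBasis x xs) (hqg : QuasiGreedyX x xs) :
    ∃ C : ℝ, 0 < C ∧
      (∀ a : ℕ → ℝ, Summable (fun n => |a n|) →
        ∃ f : X, Filter.Tendsto (fun N => ∑ n ∈ Finset.range N, a n • x n)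
            Filter.atTop (nhds f) ∧
          ‖f‖ ≤ C * ∑' n, |a n|) ∧
      (∀ f : X, ∀ t : ℝ, 0 < t → ∀ s : Finset ℕ,
        (∀ n ∈ s, t ≤ |xs n f|) → t * (s.card : ℝ) ≤ C * ‖f‖) :=
  stmt13_general hGT x xs hbasis hqg.brtp
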